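/- Let μ ≥ 1. Let X' ∈ ℝ^{m'×2} (m' ≥ 1) and X'' ∈ ℝ^{m''×2} each be μ-complex in both the ℓ₀ and ℓ₁ sense, with ‖X''η‖₁ ≤ 2μ·‖X'η‖₁ for all η ∈ ℝ². Let X ∈ ℝ^{m×2} be their vertical concatenation, let U ∈ ℝ^{m×2} have orthonormal columns with X = U·R for some R ∈ ℝ^{2×2}, and let c_1,…,c_m ∈ [0,1/2). Define f₁(Xβ) = ∑_{i ∈ rows of X'} g_{c_i}(x_i·β) and f₂(Xβ) = ∑_{i ∈ rows of X''} h_{c_i}(x_i·β). Then: (i) for every row index i of X' and every β ∈ ℝ², g_{c_i}(x_i·β) ≤ 42.5·μ²·(‖U_i‖₂ + 1/m')·(f₁(Xβ) + f₂(Xβ)), where U_i is the corresponding row of U; and (ii) ∑_{i ∈ rows of X'} 42.5·μ²·(‖U_i‖₂ + 1/m') ≤ 170·μ²·√(m'). -/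

import Mathlib

/-!
Since `g_c(z) ≥ max(z, 0)`, and `g_c(z) ≥ log 2` for `z ≥ 0`, the two complexity conditions on `X'`
in the direction `-β` give `‖X'β‖₁ ≤ (1 + μ) f₁` and `m' log 2 ≤ (1 + μ) f₁`. As `U` has
orthonormal columns, Cauchy–Schwarz gives `|x_i·β| ≤ ‖U_i‖₂ ‖Xβ‖₂ ≤ ‖U_i‖₂ ‖Xβ‖₁`, and
`‖Xβ‖₁` is at most a multiple of `‖X'β‖₁` by the ratio hypothesis. For `c ≤ 1/2` we have
`g_c(z) ≤ |z| + 2 log 2`, so `g_{c_i}(x_i·β)` is bounded by a multiple of `(‖U_i‖₂ + 1/m') f₁`,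
and `f₂ ≥ 0`. The bound on the sum of the sensitivities is Cauchy–Schwarz together with
`‖U‖_F² = 2`.
-/

open Finset Matrix

/-- `g_c(z) = ln(1+e^z) - ln(1-c)`. -/
noncomputable def gfun (c z : ℝ) : ℝ := Real.log (1 + Real.exp z) - Real.log (1 - c)

/-- `h_c(z) = -ln(c + (1-c)/(1+e^{-z}))`. -/
noncomputable def hfun (c z : ℝ) : ℝ := -Real.log (c + (1 - c) / (1 + Real.exp (-z)))

/-- The rows `x` are `μ`-complex in the ℓ₁ sense. -/
def Mu1Complex {ι : Type} [Fintype ι] {d : ℕ} (x : ι → Fin d → ℝ) (μ : ℝ) : Prop :=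
  ∀ η : Fin d → ℝ,
    ∑ i ∈ Finset.univ.filter (fun i => 0 ≤ x i ⬝ᵥ η), x i ⬝ᵥ η ≤
      μ * ∑ i ∈ Finset.univ.filter (fun i => x i ⬝ᵥ η < 0), |x i ⬝ᵥ η|

/-- The rows `x` are `μ`-complex in the ℓ₀ sense. -/
def Mu0Complex {ι : Type} [Fintype ι] {d : ℕ} (x : ι → Fin d → ℝ) (μ : ℝ) : Prop :=
  ∀ η : Fin d → ℝ, η ≠ 0 →
    ((Finset.univ.filter fun i => 0 ≤ x i ⬝ᵥ η).card : ℝ) ≤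
      μ * ((Finset.univ.filter fun i => x i ⬝ᵥ η < 0).card : ℝ)

section ThreePLFunctions

variable {c : ℝ}

lemma log_one_add_exp_le_gfun (hc₀ : 0 ≤ c) (hc₁ : c < 1) (z : ℝ) :
    Real.log (1 + Real.exp z) ≤ gfun c z := by
  have hlog : Real.log (1 - c) ≤ 0 := Real.log_nonpos (by linarith) (by linarith)
  unfold gfun
  linarith

lemma gfun_nonneg (hc₀ : 0 ≤ c) (hc₁ : c < 1) (z : ℝ) : 0 ≤ gfun c z :=
  (Real.log_nonneg (by linarith [Real.exp_pos z])).trans (log_one_add_exp_le_gfun hc₀ hc₁ z)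

lemma posPart_le_gfun (hc₀ : 0 ≤ c) (hc₁ : c < 1) (z : ℝ) : z⁺ ≤ gfun c z := by
  have hz : z ≤ Real.log (1 + Real.exp z) := by
    rw [Real.le_log_iff_exp_le (by positivity)]
    linarith
  exact sup_le (hz.trans (log_one_add_exp_le_gfun hc₀ hc₁ z)) (gfun_nonneg hc₀ hc₁ z)

lemma log_two_le_gfun (hc₀ : 0 ≤ c) (hc₁ : c < 1) {z : ℝ} (hz : 0 ≤ z) :
    Real.log 2 ≤ gfun c z :=
  (Real.log_le_log two_pos (by linarith [Real.one_le_exp hz])).trans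
    (log_one_add_exp_le_gfun hc₀ hc₁ z)

lemma gfun_le_abs_add_two_mul_log_two (hc : c ≤ 1 / 2) (z : ℝ) :
    gfun c z ≤ |z| + 2 * Real.log 2 := by
  have hexp : Real.log (1 + Real.exp z) ≤ |z| + Real.log 2 := by
    rw [Real.log_le_iff_le_exp (by positivity), Real.exp_add, Real.exp_log two_pos]
    linarith [Real.exp_le_exp.2 (le_abs_self z), Real.one_le_exp (abs_nonneg z)]
  have hlog : -Real.log 2 ≤ Real.log (1 - c) := by
    rw [← Real.log_inv]
    exact Real.log_le_log (by norm_num) (by linarith)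
  unfold gfun
  linarith

lemma hfun_nonneg (hc₀ : 0 ≤ c) (hc₁ : c ≤ 1) (z : ℝ) : 0 ≤ hfun c z := by
  have hc : 0 ≤ 1 - c := sub_nonneg.2 hc₁
  have hle : (1 - c) / (1 + Real.exp (-z)) ≤ 1 - c :=
    div_le_self hc (by linarith [Real.exp_pos (-z)])
  exact neg_nonneg.2 (Real.log_nonpos (by positivity) (by linarith))

end ThreePLFunctions

section Complexity

variable {ι : Type} [Fintype ι] {d : ℕ} {x : ι → Fin d → ℝ} {μ : ℝ} {c : ι → ℝ}

lemma Mu1Complex.sum_abs_le (hx : Mu1Complex x μ) (η : Fin d → ℝ) :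
    ∑ i, |x i ⬝ᵥ η| ≤ (1 + μ) * ∑ i, (x i ⬝ᵥ η)⁺ := by
  have hneg : ∑ i with 0 ≤ x i ⬝ᵥ -η, x i ⬝ᵥ -η = ∑ i, (x i ⬝ᵥ η)⁻ := by
    rw [sum_filter]
    refine sum_congr rfl fun i _ => ?_
    rw [dotProduct_neg, negPart_def, max_def']
  have hpos : ∑ i with x i ⬝ᵥ -η < 0, |x i ⬝ᵥ -η| = ∑ i, (x i ⬝ᵥ η)⁺ := by
    rw [sum_filter]
    refine sum_congr rfl fun i _ => ?_
    rw [dotProduct_neg, posPart_def, max_def']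
    grind
  have hcomplex := hx (-η)
  rw [hneg, hpos] at hcomplex
  simp only [← posPart_add_negPart, sum_add_distrib]
  linarith

lemma Mu0Complex.card_le (hx : Mu0Complex x μ) (hμ : 0 ≤ μ) (η : Fin d → ℝ) :
    (Fintype.card ι : ℝ) ≤ (1 + μ) * #{i | 0 ≤ x i ⬝ᵥ η} := by
  rcases eq_or_ne η 0 with rfl | hη
  · simp only [dotProduct_zero, le_refl, filter_true, card_univ]
    nlinarith [(Fintype.card ι).cast_nonneg (α := ℝ)]
  have hcomplex := hx (-η) (neg_ne_zero.2 hη)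
  simp only [dotProduct_neg, Left.nonneg_neg_iff, Left.neg_neg_iff] at hcomplex
  have hsplit : (#{i | x i ⬝ᵥ η ≤ 0} : ℝ) + #{i | 0 < x i ⬝ᵥ η} = Fintype.card ι := by
    simpa only [not_le, ← Nat.cast_add, card_univ, Nat.cast_inj] using
      card_filter_add_card_filter_not (s := univ) fun i => x i ⬝ᵥ η ≤ 0
  calc (Fintype.card ι : ℝ) ≤ (1 + μ) * #{i | 0 < x i ⬝ᵥ η} := by linarith
    _ ≤ (1 + μ) * #{i | 0 ≤ x i ⬝ᵥ η} := by
      gcongr with i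
      exact le_of_lt

lemma Mu1Complex.sum_abs_le_sum_gfun (hx : Mu1Complex x μ) (hμ : 0 ≤ μ)
    (hc₀ : ∀ i, 0 ≤ c i) (hc₁ : ∀ i, c i < 1) (β : Fin d → ℝ) :
    ∑ i, |x i ⬝ᵥ β| ≤ (1 + μ) * ∑ i, gfun (c i) (x i ⬝ᵥ β) := by
  refine (hx.sum_abs_le β).trans ?_
  gcongr with i
  exact posPart_le_gfun (hc₀ i) (hc₁ i) _

lemma card_filter_nonneg_mul_log_two_le_sum_gfun (hc₀ : ∀ i, 0 ≤ c i) (hc₁ : ∀ i, c i < 1)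
    (z : ι → ℝ) : #{i | 0 ≤ z i} * Real.log 2 ≤ ∑ i, gfun (c i) (z i) :=
  calc #{i | 0 ≤ z i} * Real.log 2 = ∑ i with 0 ≤ z i, Real.log 2 := by
        rw [sum_const, nsmul_eq_mul]
    _ ≤ ∑ i with 0 ≤ z i, gfun (c i) (z i) :=
        sum_le_sum fun i hi => log_two_le_gfun (hc₀ i) (hc₁ i) (mem_filter.1 hi).2
    _ ≤ ∑ i, gfun (c i) (z i) :=
        sum_le_sum_of_subset_of_nonneg (filter_subset _ _) fun i _ _ =>
          gfun_nonneg (hc₀ i) (hc₁ i) _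

lemma Mu0Complex.card_mul_log_two_le_sum_gfun (hx : Mu0Complex x μ) (hμ : 0 ≤ μ)
    (hc₀ : ∀ i, 0 ≤ c i) (hc₁ : ∀ i, c i < 1) (β : Fin d → ℝ) :
    Fintype.card ι * Real.log 2 ≤ (1 + μ) * ∑ i, gfun (c i) (x i ⬝ᵥ β) :=
  calc Fintype.card ι * Real.log 2
      ≤ (1 + μ) * #{i | 0 ≤ x i ⬝ᵥ β} * Real.log 2 := by
        gcongr
        exact hx.card_le hμ β
    _ = (1 + μ) * (#{i | 0 ≤ x i ⬝ᵥ β} * Real.log 2) := mul_assoc _ _ _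
    _ ≤ (1 + μ) * ∑ i, gfun (c i) (x i ⬝ᵥ β) := by
        gcongr
        exact card_filter_nonneg_mul_log_two_le_sum_gfun hc₀ hc₁ _

end Complexity

section OrthonormalColumns

variable {n r : Type*} [Fintype n] [Fintype r] [DecidableEq r] {U : Matrix n r ℝ}

lemma sum_sq_mulVec_of_transpose_mul_self_eq_one (hU : Uᵀ * U = 1) (w : r → ℝ) :
    ∑ j, (U *ᵥ w) j ^ 2 = ∑ k, w k ^ 2 := by
  have hdot : (U *ᵥ w) ⬝ᵥ (U *ᵥ w) = w ⬝ᵥ w := by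
    rw [dotProduct_mulVec, vecMul_mulVec, hU, vecMul_one]
  simpa only [dotProduct, ← sq] using hdot

lemma abs_mulVec_le_sqrt_row_mul_sum_abs (hU : Uᵀ * U = 1) (w : r → ℝ) (i : n) :
    |(U *ᵥ w) i| ≤ √(∑ k, U i k ^ 2) * ∑ j, |(U *ᵥ w) j| := by
  have hl2_le_l1 : ∑ k, w k ^ 2 ≤ (∑ j, |(U *ᵥ w) j|) ^ 2 := by
    rw [← sum_sq_mulVec_of_transpose_mul_self_eq_one hU]
    simpa only [sq_abs] using
      sum_sq_le_sq_sum_of_nonneg (s := univ) fun j _ => abs_nonneg ((U *ᵥ w) j)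
  refine abs_le_of_sq_le_sq ?_ (by positivity)
  calc (U *ᵥ w) i ^ 2 ≤ (∑ k, U i k ^ 2) * ∑ k, w k ^ 2 := sum_mul_sq_le_sq_mul_sq univ (U i) w
    _ ≤ (∑ k, U i k ^ 2) * (∑ j, |(U *ᵥ w) j|) ^ 2 := by gcongr
    _ = (√(∑ k, U i k ^ 2) * ∑ j, |(U *ᵥ w) j|) ^ 2 := by
      rw [mul_pow, Real.sq_sqrt (by positivity)]

lemma sum_sum_sq_of_transpose_mul_self_eq_one (hU : Uᵀ * U = 1) :
    ∑ i, ∑ k, U i k ^ 2 = Fintype.card r := by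
  rw [sum_comm, ← trace_one (R := ℝ), ← hU]
  simp only [trace, diag_apply, mul_apply, transpose_apply, sq]

lemma sum_sqrt_row_le_sqrt_mul_sqrt (hU : Uᵀ * U = 1) (s : Finset n) :
    ∑ i ∈ s, √(∑ k, U i k ^ 2) ≤ √(Fintype.card r) * √(#s) := by
  have hfrob : ∑ i ∈ s, ∑ k, U i k ^ 2 ≤ Fintype.card r := by
    rw [← sum_sum_sq_of_transpose_mul_self_eq_one hU]
    exact sum_le_univ_sum_of_nonneg fun i => by positivity
  calc ∑ i ∈ s, √(∑ k, U i k ^ 2) = ∑ i ∈ s, √(∑ k, U i k ^ 2) * √1 := by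
        simp only [Real.sqrt_one, mul_one]
    _ ≤ √(∑ i ∈ s, ∑ k, U i k ^ 2) * √(∑ _i ∈ s, 1) :=
        Real.sum_sqrt_mul_sqrt_le s (fun i => by positivity) fun _ => zero_le_one
    _ ≤ √(Fintype.card r) * √(#s) := by
        rw [sum_const, nsmul_one]
        gcongr

end OrthonormalColumns

section Sensitivity

variable {ι κ : Type} [Fintype ι] [Fintype κ] {d r : ℕ} {μ ρ : ℝ}
  {X' : Matrix ι (Fin d) ℝ} {X'' : Matrix κ (Fin d) ℝ}
  {U : Matrix (ι ⊕ κ) (Fin r) ℝ} {R : Matrix (Fin r) (Fin d) ℝ}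

lemma abs_dotProduct_le_sqrt_row_mul_sum_abs
    (hratio : ∀ η, ∑ j, |X'' j ⬝ᵥ η| ≤ ρ * ∑ i, |X' i ⬝ᵥ η|)
    (hU : Uᵀ * U = 1) (hX : fromRows X' X'' = U * R) (i : ι) (β : Fin d → ℝ) :
    |X' i ⬝ᵥ β| ≤ √(∑ k, U (Sum.inl i) k ^ 2) * ((1 + ρ) * ∑ i', |X' i' ⬝ᵥ β|) := by
  have hXβ : U *ᵥ (R *ᵥ β) = Sum.elim (X' *ᵥ β) (X'' *ᵥ β) := by
    rw [mulVec_mulVec, ← hX, fromRows_mulVec]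
  have hrow := abs_mulVec_le_sqrt_row_mul_sum_abs hU (R *ᵥ β) (Sum.inl i)
  rw [hXβ, Fintype.sum_sum_type] at hrow
  calc |X' i ⬝ᵥ β|
      ≤ √(∑ k, U (Sum.inl i) k ^ 2) * (∑ i', |X' i' ⬝ᵥ β| + ∑ j, |X'' j ⬝ᵥ β|) := hrow
    _ ≤ √(∑ k, U (Sum.inl i) k ^ 2) * ((1 + ρ) * ∑ i', |X' i' ⬝ᵥ β|) := by
        gcongr
        linarith [hratio β]

lemma gfun_le_mul_sum_gfun (hμ : 0 ≤ μ) (hρ : 0 ≤ ρ)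
    (hX'1 : Mu1Complex X' μ) (hX'0 : Mu0Complex X' μ)
    (hratio : ∀ η, ∑ j, |X'' j ⬝ᵥ η| ≤ ρ * ∑ i, |X' i ⬝ᵥ η|)
    (hU : Uᵀ * U = 1) (hX : fromRows X' X'' = U * R)
    {c : ι → ℝ} (hc : ∀ i, 0 ≤ c i ∧ c i ≤ 1 / 2) (i : ι) (β : Fin d → ℝ) :
    gfun (c i) (X' i ⬝ᵥ β) ≤
      (1 + μ) * ((1 + ρ) * √(∑ k, U (Sum.inl i) k ^ 2) + 2 / Fintype.card ι) *
        ∑ i', gfun (c i') (X' i' ⬝ᵥ β) := by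
  have : Nonempty ι := ⟨i⟩
  have hc₁ (i' : ι) : c i' < 1 := (hc i').2.trans_lt one_half_lt_one
  set f := ∑ i', gfun (c i') (X' i' ⬝ᵥ β)
  have hl1 : ∑ i', |X' i' ⬝ᵥ β| ≤ (1 + μ) * f :=
    hX'1.sum_abs_le_sum_gfun hμ (fun i' => (hc i').1) hc₁ β
  have hlog : Real.log 2 ≤ (1 + μ) * f / Fintype.card ι := by
    rw [le_div_iff₀' (by positivity)]
    exact hX'0.card_mul_log_two_le_sum_gfun hμ (fun i' => (hc i').1) hc₁ β
  calc gfun (c i) (X' i ⬝ᵥ β) ≤ |X' i ⬝ᵥ β| + 2 * Real.log 2 :=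
        gfun_le_abs_add_two_mul_log_two (hc i).2 _
    _ ≤ √(∑ k, U (Sum.inl i) k ^ 2) * ((1 + ρ) * ∑ i', |X' i' ⬝ᵥ β|) + 2 * Real.log 2 := by
        gcongr
        exact abs_dotProduct_le_sqrt_row_mul_sum_abs hratio hU hX i β
    _ ≤ √(∑ k, U (Sum.inl i) k ^ 2) * ((1 + ρ) * ((1 + μ) * f)) +
          2 * ((1 + μ) * f / Fintype.card ι) := by gcongr
    _ = (1 + μ) * ((1 + ρ) * √(∑ k, U (Sum.inl i) k ^ 2) + 2 / Fintype.card ι) * f := by ring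

lemma sum_sqrt_row_inl_add_one_div_card_le (hU : Uᵀ * U = 1) :
    ∑ i, (√(∑ k, U (Sum.inl i) k ^ 2) + 1 / (Fintype.card ι : ℝ)) ≤
      (√r + 1) * √(Fintype.card ι) := by
  rcases isEmpty_or_nonempty ι with _ | _
  · simp
  have hrows := sum_sqrt_row_le_sqrt_mul_sqrt hU (univ.map Function.Embedding.inl)
  rw [sum_map, card_map, card_univ, Fintype.card_fin] at hrows
  have hcard : ∑ _i : ι, 1 / (Fintype.card ι : ℝ) = 1 := by
    rw [sum_const, card_univ, nsmul_eq_mul, mul_one_div_cancel (by positivity)]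
  have hsqrt : 1 ≤ √(Fintype.card ι : ℝ) :=
    Real.one_le_sqrt.2 (by exact_mod_cast Fintype.card_pos)
  rw [sum_add_distrib, hcard, add_one_mul]
  exact add_le_add hrows hsqrt

theorem stmt13_general (hμ : 0 ≤ μ) (hρ : 0 ≤ ρ)
    (hX'1 : Mu1Complex X' μ) (hX'0 : Mu0Complex X' μ)
    (hratio : ∀ η, ∑ j, |X'' j ⬝ᵥ η| ≤ ρ * ∑ i, |X' i ⬝ᵥ η|)
    (hU : Uᵀ * U = 1) (hX : fromRows X' X'' = U * R)
    {c' : ι → ℝ} (hc' : ∀ i, 0 ≤ c' i ∧ c' i ≤ 1 / 2)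
    {c'' : κ → ℝ} (hc'' : ∀ j, 0 ≤ c'' j ∧ c'' j ≤ 1)
    {C : ℝ} (hC : (1 + μ) * (2 + ρ) ≤ C) :
    (∀ i β, gfun (c' i) (X' i ⬝ᵥ β) ≤
        C * (√(∑ k, U (Sum.inl i) k ^ 2) + 1 / (Fintype.card ι : ℝ)) *
          (∑ i', gfun (c' i') (X' i' ⬝ᵥ β) + ∑ j, hfun (c'' j) (X'' j ⬝ᵥ β))) ∧
      ∑ i, C * (√(∑ k, U (Sum.inl i) k ^ 2) + 1 / (Fintype.card ι : ℝ)) ≤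
        C * ((√r + 1) * √(Fintype.card ι)) := by
  have hC₀ : 0 ≤ C := le_trans (by positivity) hC
  refine ⟨fun i β => ?_, ?_⟩
  · have hf₁ : 0 ≤ ∑ i', gfun (c' i') (X' i' ⬝ᵥ β) := sum_nonneg fun i' _ =>
      gfun_nonneg (hc' i').1 ((hc' i').2.trans_lt one_half_lt_one) _
    have hf₂ : 0 ≤ ∑ j, hfun (c'' j) (X'' j ⬝ᵥ β) := sum_nonneg fun j _ =>
      hfun_nonneg (hc'' j).1 (hc'' j).2 _
    refine (gfun_le_mul_sum_gfun hμ hρ hX'1 hX'0 hratio hU hX hc' i β).trans ?_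
    gcongr ?_ * ?_
    · calc (1 + μ) * ((1 + ρ) * √(∑ k, U (Sum.inl i) k ^ 2) + 2 / Fintype.card ι)
          ≤ (1 + μ) * ((2 + ρ) * √(∑ k, U (Sum.inl i) k ^ 2) + (2 + ρ) / Fintype.card ι) := by
            gcongr <;> linarith
        _ = (1 + μ) * (2 + ρ) * (√(∑ k, U (Sum.inl i) k ^ 2) + 1 / Fintype.card ι) := by ring
        _ ≤ C * (√(∑ k, U (Sum.inl i) k ^ 2) + 1 / Fintype.card ι) := by gcongr
    · exact le_add_of_nonneg_right hf₂
  · rw [← mul_sum]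
    exact mul_le_mul_of_nonneg_left (sum_sqrt_row_inl_add_one_div_card_le hU) hC₀

end Sensitivity

/-- Sensitivity bounds for the logistic summands of the 3PL objective `f₁ + f₂`:
(i) each sensitivity is at most `s'_i = 42.5 μ² (‖U_i‖₂ + 1/m')`, and
(ii) `∑ s'_i ≤ 170 μ² √m'`. -/
theorem stmt13 {m' m'' : ℕ} (hm : 1 ≤ m') (μ : ℝ) (hμ : 1 ≤ μ)
    (X' : Fin m' → Fin 2 → ℝ) (X'' : Fin m'' → Fin 2 → ℝ)
    (hX'1 : Mu1Complex X' μ) (hX'0 : Mu0Complex X' μ)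
    (hX''1 : Mu1Complex X'' μ) (hX''0 : Mu0Complex X'' μ)
    (hratio : ∀ η : Fin 2 → ℝ, ∑ i, |X'' i ⬝ᵥ η| ≤ 2 * μ * ∑ i, |X' i ⬝ᵥ η|)
    (U : Fin m' ⊕ Fin m'' → Fin 2 → ℝ)
    (hU : ∀ k l : Fin 2, ∑ i, U i k * U i l = if k = l then (1 : ℝ) else 0)
    (R : Matrix (Fin 2) (Fin 2) ℝ)
    (hXUR : ∀ i k, Sum.elim X' X'' i k = ∑ l, U i l * R l k)
    (c : Fin m' ⊕ Fin m'' → ℝ) (hc : ∀ i, 0 ≤ c i ∧ c i < 1 / 2) :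
    (∀ (i : Fin m') (β : Fin 2 → ℝ),
        gfun (c (Sum.inl i)) (X' i ⬝ᵥ β) ≤
          42.5 * μ ^ 2 * (Real.sqrt (∑ k, (U (Sum.inl i) k) ^ 2) + 1 / (m' : ℝ)) *
            ((∑ i', gfun (c (Sum.inl i')) (X' i' ⬝ᵥ β)) +
              ∑ i', hfun (c (Sum.inr i')) (X'' i' ⬝ᵥ β))) ∧
      ∑ i : Fin m',
          42.5 * μ ^ 2 * (Real.sqrt (∑ k, (U (Sum.inl i) k) ^ 2) + 1 / (m' : ℝ)) ≤
        170 * μ ^ 2 * Real.sqrt (m' : ℝ) := by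
  have hgeneral := stmt13_general (ρ := 2 * μ) (C := 42.5 * μ ^ 2) (by linarith) (by linarith)
    hX'1 hX'0 hratio (Matrix.ext hU) (Matrix.ext hXUR) (fun i => (hc (.inl i)).imp_right le_of_lt)
    (fun j => (hc (.inr j)).imp_right fun hcj => by linarith) (by nlinarith)
  rw [Fintype.card_fin] at hgeneral
  have hsqrt_two : √((2 : ℕ) : ℝ) ≤ 3 := Real.sqrt_le_iff.2 (by norm_num)
  refine ⟨hgeneral.1, hgeneral.2.trans ?_⟩
  calc 42.5 * μ ^ 2 * ((√((2 : ℕ) : ℝ) + 1) * √(m' : ℝ))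
      ≤ 42.5 * μ ^ 2 * ((3 + 1) * √(m' : ℝ)) := by gcongr
    _ = 170 * μ ^ 2 * √(m' : ℝ) := by ring
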